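/- arXiv:1912.00870 — 2 statements merged into one kernel-verified Lean document; each statement's English description precedes it below -/
import Mathlib

section
/- Let L ≥ 2 and let H be the linear operator on the space of functions ψ : (ZMod L → Bool) → ℂ defined by (Hψ)(σ) = Σ_{ℓ ∈ ZMod L} (ψ(σ) − ψ(σ ∘ Equiv.swap ℓ (ℓ+1))), i.e. H = Σ_ℓ (𝕀 − P_{ℓ,ℓ+1}) is the Heisenberg XXX Hamiltonian on a cyclic chain of length L. For n ∈ ℤ set p = 2πn/L and define the one-magnon plane-wave state ψ_p by ψ_p(σ) = exp(i p · x.val) if σ takes the value true at exactly one site x ∈ ZMod L and false at all other sites, and ψ_p(σ) = 0 otherwise. Then ψ_p is an eigenvector of H with eigenvalue 4 sin²(p/2), i.e. H ψ_p = (2 − 2 cos p) ψ_p. -/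
/-! A permutation operator moves the flipped spin of a one-magnon configuration, so the exchange
Hamiltonian acts on one-magnon amplitudes as the Laplacian `2 f(x) - f(x + 1) - f(x - 1)` of the
cycle. Additive characters of `ZMod L` diagonalise it: a character with `χ 1 = ζ` has
eigenvalue `2 - ζ - ζ⁻¹`. Momentum quantisation makes `ζ = exp (i p)` an `L`-th root of unity, so
the plane wave is such a character. -/

open Equiv

section OneMagnonSector

variable {ι M : Type*} [DecidableEq ι]

/-- The spin configuration with a single down spin, at the site `x`; `true` encodes spin down. -/
def oneMagnonConfig (x : ι) : ι → Bool := fun y ↦ decide (y = x)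

theorem oneMagnonConfig_injective : Function.Injective (oneMagnonConfig (ι := ι)) := by
  intro x y h
  simpa [oneMagnonConfig] using congrFun h x

theorem oneMagnonConfig_comp_perm (x : ι) (π : Perm ι) :
    oneMagnonConfig x ∘ π = oneMagnonConfig (π.symm x) := by
  ext y
  simp [oneMagnonConfig, Equiv.eq_symm_apply]

/-- The state with amplitude `f x` on the configuration with a single down spin at `x`, and zero
amplitude outside the one-magnon sector. -/
noncomputable def oneMagnonState [Zero M] (f : ι → M) : (ι → Bool) → M :=
  Function.extend oneMagnonConfig f 0

theorem oneMagnonState_oneMagnonConfig [Zero M] (f : ι → M) (x : ι) :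
    oneMagnonState f (oneMagnonConfig x) = f x :=
  oneMagnonConfig_injective.extend_apply f 0 x

theorem oneMagnonState_of_notMem_range [Zero M] (f : ι → M) {σ : ι → Bool}
    (hσ : σ ∉ Set.range oneMagnonConfig) : oneMagnonState f σ = 0 :=
  Function.extend_apply' f _ σ hσ

theorem oneMagnonState_apply_eq_sum [Fintype ι] [AddCommMonoid M] (f : ι → M) (σ : ι → Bool) :
    oneMagnonState f σ = ∑ x, if σ = oneMagnonConfig x then f x else 0 := by
  by_cases hσ : σ ∈ Set.range oneMagnonConfig
  · obtain ⟨x, rfl⟩ := hσ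
    simp [oneMagnonState_oneMagnonConfig, oneMagnonConfig_injective.eq_iff]
  · rw [oneMagnonState_of_notMem_range f hσ, Finset.sum_eq_zero]
    exact fun x _ ↦ if_neg fun h ↦ hσ ⟨x, h.symm⟩

theorem oneMagnonState_smul {R : Type*} [Zero M] [SMulZeroClass R M] (c : R) (f : ι → M) :
    oneMagnonState (c • f) = c • oneMagnonState f := by
  simpa [oneMagnonState] using Function.extend_smul c oneMagnonConfig f (0 : (ι → Bool) → M)

theorem oneMagnonState_comp_perm [Zero M] (f : ι → M) (π : Perm ι) (σ : ι → Bool) :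
    oneMagnonState f (σ ∘ π) = oneMagnonState (f ∘ π.symm) σ := by
  by_cases hσ : σ ∈ Set.range oneMagnonConfig
  · obtain ⟨x, rfl⟩ := hσ
    simp [oneMagnonConfig_comp_perm, oneMagnonState_oneMagnonConfig]
  · have hσπ : σ ∘ π ∉ Set.range oneMagnonConfig := by
      rintro ⟨x, hx⟩
      refine hσ ⟨π x, ?_⟩
      rw [← π.symm_symm, ← oneMagnonConfig_comp_perm, hx, Function.comp_assoc]
      simp
    rw [oneMagnonState_of_notMem_range _ hσ, oneMagnonState_of_notMem_range _ hσπ]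

end OneMagnonSector

section CayleyLaplacian

variable {G M : Type*} [AddGroup G] [AddCommGroup M]

/-- The Laplacian of the Cayley graph of `G` with generators `a` and `-a`, which are counted
separately even if they coincide. -/
def cayleyLaplacian (a : G) (f : G → M) : G → M :=
  fun x ↦ (f x - f (x + a)) + (f x - f (x - a))

theorem cayleyLaplacian_addChar {R : Type*} [CommRing R] (a : G) (χ : AddChar G R) :
    cayleyLaplacian a χ = (2 - χ a - χ (-a)) • ⇑χ := by
  ext x
  simp only [cayleyLaplacian, sub_eq_add_neg x, AddChar.map_add_eq_mul, Pi.smul_apply, smul_eq_mul]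
  ring

theorem sub_apply_swap_add_right [DecidableEq G] (f : G → M) (a x g : G) :
    f x - f (swap g (g + a) x) =
      (if g = x then f x - f (x + a) else 0) + if g = x - a then f x - f (x - a) else 0 := by
  rcases eq_or_ne g x with rfl | hgx
  · rcases eq_or_ne a 0 with rfl | ha
    · simp
    · simp [eq_sub_iff_add_eq, ha]
  · rcases eq_or_ne g (x - a) with rfl | hgxa
    · simp [hgx]
    · have hx : x ≠ g + a := fun h ↦ hgxa (eq_sub_of_add_eq h.symm)
      simp [swap_apply_of_ne_of_ne hgx.symm hx, hgx, hgxa]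

theorem sum_sub_apply_swap_add_right [Fintype G] [DecidableEq G] (f : G → M) (a x : G) :
    ∑ g, (f x - f (swap g (g + a) x)) = cayleyLaplacian a f x := by
  simp [sub_apply_swap_add_right, Finset.sum_add_distrib, cayleyLaplacian]

end CayleyLaplacian

section ExchangeHamiltonian

variable {G M : Type*} [AddGroup G] [Fintype G] [DecidableEq G] [AddCommGroup M]

/-- The translation-invariant exchange Hamiltonian `∑ g, (𝕀 - P_{g, g + a})` on spins placed at
the elements of a finite group. The XXX chain of length `L` is the case `G = ZMod L`, `a = 1`. -/
def exchangeHamiltonian (a : G) (ψ : (G → Bool) → M) : (G → Bool) → M :=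
  fun σ ↦ ∑ g, (ψ σ - ψ (σ ∘ swap g (g + a)))

theorem exchangeHamiltonian_oneMagnonState (a : G) (f : G → M) :
    exchangeHamiltonian a (oneMagnonState f) = oneMagnonState (cayleyLaplacian a f) := by
  ext σ
  simp only [exchangeHamiltonian, oneMagnonState_comp_perm, symm_swap]
  by_cases hσ : σ ∈ Set.range oneMagnonConfig
  · obtain ⟨x, rfl⟩ := hσ
    simpa only [oneMagnonState_oneMagnonConfig, Function.comp_apply] using
      sum_sub_apply_swap_add_right f a x
  · simp [oneMagnonState_of_notMem_range _ hσ]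

theorem exchangeHamiltonian_oneMagnonState_addChar {R : Type*} [CommRing R] (a : G)
    (χ : AddChar G R) :
    exchangeHamiltonian a (oneMagnonState χ) = (2 - χ a - χ (-a)) • oneMagnonState χ := by
  rw [exchangeHamiltonian_oneMagnonState, cayleyLaplacian_addChar, oneMagnonState_smul]

end ExchangeHamiltonian

section Dispersion

open Complex

theorem exp_I_mul_two_pi_mul_int_div_pow (L : ℕ) [NeZero L] (n : ℤ) :
    exp (I * (2 * Real.pi * n / L : ℝ)) ^ L = 1 := by
  have hL : (L : ℂ) ≠ 0 := NeZero.ne _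
  rw [← exp_nat_mul, exp_eq_one_iff]
  refine ⟨n, ?_⟩
  push_cast
  field_simp

theorem four_mul_sin_half_sq (p : ℝ) : 4 * Real.sin (p / 2) ^ 2 = 2 - 2 * Real.cos p := by
  rw [Real.sin_sq_eq_half_sub, mul_div_cancel₀ p two_ne_zero]
  ring

theorem two_sub_exp_I_mul_sub_inv (z : ℂ) :
    2 - exp (I * z) - (exp (I * z))⁻¹ = 2 - 2 * cos z := by
  rw [two_cos, ← exp_neg, mul_comm I, neg_mul]
  ring

end Dispersion

/-- The one-magnon plane wave with momentum `p = 2πn/L` is an eigenstate of the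
Heisenberg XXX Hamiltonian `H = Σ_ℓ (𝕀 − P_{ℓ,ℓ+1})` on a cyclic chain of
length `L`, with eigenvalue `4 sin²(p/2) = 2 − 2 cos p`. -/
theorem one_magnon_eigenstate_XXX (L : ℕ) [NeZero L] (hL : 2 ≤ L) (n : ℤ) (p : ℝ)
    (hp : p = 2 * Real.pi * n / L)
    (H : ((ZMod L → Bool) → ℂ) →ₗ[ℂ] ((ZMod L → Bool) → ℂ))
    (hH : ∀ (ψ : (ZMod L → Bool) → ℂ) (σ : ZMod L → Bool),
      H ψ σ = ∑ ℓ : ZMod L, (ψ σ - ψ (σ ∘ ⇑(Equiv.swap ℓ (ℓ + 1)))))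
    (ψp : (ZMod L → Bool) → ℂ)
    (hψp : ∀ σ : ZMod L → Bool, ψp σ = ∑ x : ZMod L,
      if σ = (fun y => if y = x then true else false)
      then Complex.exp (Complex.I * (p : ℂ) * (x.val : ℂ)) else 0) :
    H ψp = ((4 * Real.sin (p / 2) ^ 2 : ℝ) : ℂ) • ψp ∧
      ((4 * Real.sin (p / 2) ^ 2 : ℝ) : ℂ) = 2 - 2 * (Real.cos p : ℂ) := by
  have eigenvalue_eq : ((4 * Real.sin (p / 2) ^ 2 : ℝ) : ℂ) = 2 - 2 * (Real.cos p : ℂ) := by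
    exact_mod_cast four_mul_sin_half_sq p
  refine ⟨?_, eigenvalue_eq⟩
  have hζ : Complex.exp (Complex.I * p) ^ L = 1 := hp ▸ exp_I_mul_two_pi_mul_int_div_pow L n
  let χ := AddChar.zmodChar L hζ
  have hχ_one : χ 1 = Complex.exp (Complex.I * p) := by
    simpa using AddChar.zmodChar_apply' hζ 1
  have hψ : ψp = oneMagnonState χ := by
    ext σ
    have config_eq (x : ZMod L) :
        (fun y ↦ if y = x then true else false) = oneMagnonConfig x := by
      ext y
      simp [oneMagnonConfig]
    simp only [hψp, config_eq, oneMagnonState_apply_eq_sum, χ, AddChar.zmodChar_apply,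
      ← Complex.exp_nat_mul, mul_comm]
  calc H ψp = exchangeHamiltonian 1 (oneMagnonState χ) := by rw [← hψ]; exact funext (hH ψp)
    _ = (2 - χ 1 - χ (-1)) • oneMagnonState χ := exchangeHamiltonian_oneMagnonState_addChar 1 χ
    _ = ((4 * Real.sin (p / 2) ^ 2 : ℝ) : ℂ) • ψp := by
      rw [AddChar.map_neg_eq_inv, hχ_one, two_sub_exp_I_mul_sub_inv, eigenvalue_eq, hψ,
        Complex.ofReal_cos]
end

section
/- Fix κ ∈ ℂ and real momenta p₁, p₂. Set A := 1 + exp(i(p₁+p₂)), assume A − 2κ·exp(i p₁) ≠ 0, and define the scattering amplitude S := −(A − 2κ·exp(i p₂))/(A − 2κ·exp(i p₁)). Define the two-magnon Bethe wavefunction ψ : ℤ × ℤ → ℂ by ψ(x,y) = exp(i(p₁x + p₂y)) + S · exp(i(p₂x + p₁y)), and set E := E(p₁) + E(p₂) with E(p) := 2(1+κ²) − 4κ cos p. Then: (a) for all integers x, y with y > x + 1 (bulk equation), (4+4κ²)ψ(x,y) − 2κ[ψ(x−1,y) + ψ(x+1,y) + ψ(x,y−1) + ψ(x,y+1)] = E·ψ(x,y);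 and (b) for all integers x (contact equation for the adjacent pair Q Q̃), 4ψ(x,x+1) − 2κ·ψ(x−1,x+1) − 2κ·ψ(x,x+2) = E·ψ(x,x+1). Hence the Bethe ansatz with this S diagonalizes the two-magnon sector, and the total energy is additive. -/
/-!
A plane wave `z ^ x * w ^ y` solves the bulk equation on the whole of `ℤ × ℤ`, with an energy that
is symmetric in `z` and `w`, so every superposition of it with its exchange `w ^ x * z ^ y` does
too. Continued to the adjacent pair `(x, x + 1)`, the bulk equation differs from the contact
equation only by `2κ` times `ψ x x + ψ (x + 1) (x + 1) - 2κ ψ x (x + 1)`. On a plane wave this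
defect is `(zw) ^ x` times the constant `1 + zw - 2κw`, and the scattering amplitude is the
coefficient for which the constants of the two exchanged waves cancel.
-/

section Hamiltonian

variable {R : Type*} [CommRing R]

/-- The two-magnon Hamiltonian for separated magnons, extended by the same formula to all pairs of
positions, including the unphysical ones `y ≤ x`. -/
@[simps]
def bulkHamiltonian (κ : R) : Module.End R (ℤ → ℤ → R) where
  toFun ψ x y := (4 + 4 * κ ^ 2) * ψ x y -
    2 * κ * (ψ (x - 1) y + ψ (x + 1) y + ψ x (y - 1) + ψ x (y + 1))
  map_add' ψ φ := by
    ext x y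
    simp only [Pi.add_apply]
    ring
  map_smul' c ψ := by
    ext x y
    simp only [Pi.smul_apply, smul_eq_mul, RingHom.id_apply]
    ring

/-- The two-magnon Hamiltonian on the adjacent pair `Q Q̃` at positions `x` and `x + 1`: only the
outward hops survive. -/
def contactHamiltonian (κ : R) (ψ : ℤ → ℤ → R) (x : ℤ) : R :=
  4 * ψ x (x + 1) - 2 * κ * ψ (x - 1) (x + 1) - 2 * κ * ψ x (x + 2)

/-- The obstruction, up to a factor `2κ`, to a solution of the bulk equation satisfying the contact
equation at positions `x` and `x + 1`. -/
@[simps]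
def contactDefect (κ : R) : (ℤ → ℤ → R) →ₗ[R] (ℤ → R) where
  toFun ψ x := ψ x x + ψ (x + 1) (x + 1) - 2 * κ * ψ x (x + 1)
  map_add' ψ φ := by
    ext x
    simp only [Pi.add_apply]
    ring
  map_smul' c ψ := by
    ext x
    simp only [Pi.smul_apply, smul_eq_mul, RingHom.id_apply]
    ring

theorem contactHamiltonian_eq_bulkHamiltonian_add_contactDefect (κ : R) (ψ : ℤ → ℤ → R) (x : ℤ) :
    contactHamiltonian κ ψ x =
      bulkHamiltonian κ ψ x (x + 1) + 2 * κ * contactDefect κ ψ x := by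
  have hx : x + 1 + 1 = x + 2 := by ring
  simp only [contactHamiltonian, bulkHamiltonian_apply, contactDefect_apply, add_sub_cancel_right,
    hx]
  ring

theorem bulkHamiltonian_apply_of_mem_eigenspace {κ E : R} {ψ : ℤ → ℤ → R}
    (hψ : ψ ∈ (bulkHamiltonian κ).eigenspace E) (x y : ℤ) :
    bulkHamiltonian κ ψ x y = E * ψ x y :=
  congrFun₂ (Module.End.mem_eigenspace_iff.mp hψ) x y

theorem contactHamiltonian_apply_of_mem_eigenspace {κ E : R} {ψ : ℤ → ℤ → R}
    (hψ : ψ ∈ (bulkHamiltonian κ).eigenspace E) (hdefect : contactDefect κ ψ = 0) (x : ℤ) :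
    contactHamiltonian κ ψ x = E * ψ x (x + 1) := by
  rw [contactHamiltonian_eq_bulkHamiltonian_add_contactDefect,
    bulkHamiltonian_apply_of_mem_eigenspace hψ, hdefect, Pi.zero_apply, mul_zero, add_zero]

end Hamiltonian

section BetheAnsatz

variable {K : Type*} [Field K]

/-- The energy of one magnon as a function of `z = exp (i p)`, where `p` is its momentum. -/
def magnonEnergy (κ z : K) : K :=
  2 * (1 + κ ^ 2) - 2 * κ * (z + z⁻¹)

/-- The product of two one-magnon plane waves, with momenta entering through `z = exp (i p)` and
`w = exp (i q)`. -/
def planeWave (z w : K) (x y : ℤ) : K :=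
  z ^ x * w ^ y

/-- The amplitude `S` of the exchanged wave in the Bethe ansatz, as a function of the exponentials
`z` and `w` of the momenta. It takes the junk value `0` where its denominator vanishes. -/
def scatteringAmplitude (κ z w : K) : K :=
  -(1 + z * w - 2 * κ * w) / (1 + z * w - 2 * κ * z)

/-- The two-magnon Bethe wavefunction, as a function of the exponentials `z` and `w` of the
momenta. -/
def betheWave (κ z w : K) : ℤ → ℤ → K :=
  planeWave z w + scatteringAmplitude κ z w • planeWave w z

theorem planeWave_mem_eigenspace_bulkHamiltonian (κ : K) {z w : K} (hz : z ≠ 0) (hw : w ≠ 0) :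
    planeWave z w ∈ (bulkHamiltonian κ).eigenspace (magnonEnergy κ z + magnonEnergy κ w) := by
  rw [Module.End.mem_eigenspace_iff]
  ext x y
  simp only [bulkHamiltonian_apply, planeWave, magnonEnergy, Pi.smul_apply, smul_eq_mul,
    zpow_add_one₀ hz, zpow_sub_one₀ hz, zpow_add_one₀ hw, zpow_sub_one₀ hw]
  ring

theorem betheWave_mem_eigenspace_bulkHamiltonian (κ : K) {z w : K} (hz : z ≠ 0) (hw : w ≠ 0) :
    betheWave κ z w ∈ (bulkHamiltonian κ).eigenspace (magnonEnergy κ z + magnonEnergy κ w) := by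
  have hexchange := planeWave_mem_eigenspace_bulkHamiltonian κ hw hz
  rw [add_comm (magnonEnergy κ w)] at hexchange
  exact add_mem (planeWave_mem_eigenspace_bulkHamiltonian κ hz hw)
    (Submodule.smul_mem _ _ hexchange)

theorem contactDefect_planeWave (κ : K) {z w : K} (hz : z ≠ 0) (hw : w ≠ 0) (x : ℤ) :
    contactDefect κ (planeWave z w) x = (z * w) ^ x * (1 + z * w - 2 * κ * w) := by
  simp only [contactDefect_apply, planeWave, zpow_add_one₀ hz, zpow_add_one₀ hw, mul_zpow]
  ring

theorem contactDefect_betheWave {κ z w : K} (hz : z ≠ 0) (hw : w ≠ 0)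
    (hden : 1 + z * w - 2 * κ * z ≠ 0) :
    contactDefect κ (betheWave κ z w) = 0 := by
  have hcancel : scatteringAmplitude κ z w * (1 + z * w - 2 * κ * z) =
      -(1 + z * w - 2 * κ * w) :=
    div_mul_cancel₀ _ hden
  ext x
  rw [betheWave, map_add, map_smul, Pi.add_apply, Pi.smul_apply, smul_eq_mul, Pi.zero_apply,
    contactDefect_planeWave κ hz hw, contactDefect_planeWave κ hw hz, mul_comm w z]
  linear_combination (z * w) ^ x * hcancel

end BetheAnsatz

section Momentum

open Complex

theorem magnonEnergy_exp (κ p : ℂ) :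
    magnonEnergy κ (exp (I * p)) = 2 * (1 + κ ^ 2) - 4 * κ * cos p := by
  have hcos : 2 * cos p = exp (I * p) + (exp (I * p))⁻¹ := by
    rw [two_cos, ← exp_neg, mul_comm I p, neg_mul]
  rw [magnonEnergy, ← hcos]
  ring

theorem planeWave_exp (p q : ℂ) (x y : ℤ) :
    planeWave (exp (I * p)) (exp (I * q)) x y = exp (I * (p * x + q * y)) := by
  rw [planeWave, ← exp_int_mul, ← exp_int_mul, ← exp_add]
  ring_nf

theorem two_magnon_bethe_QQt_general (κ p₁ p₂ : ℂ)
    (A : ℂ) (hA : A = 1 + exp (I * (p₁ + p₂)))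
    (hden : A - 2 * κ * exp (I * p₁) ≠ 0)
    (S : ℂ) (hS : S = -(A - 2 * κ * exp (I * p₂)) / (A - 2 * κ * exp (I * p₁)))
    (ψ : ℤ → ℤ → ℂ)
    (hψ : ∀ x y : ℤ, ψ x y =
      exp (I * (p₁ * x + p₂ * y)) + S * exp (I * (p₂ * x + p₁ * y)))
    (E : ℂ)
    (hE : E = (2 * (1 + κ ^ 2) - 4 * κ * cos p₁) + (2 * (1 + κ ^ 2) - 4 * κ * cos p₂)) :
    (∀ x y : ℤ, (4 + 4 * κ ^ 2) * ψ x y -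
        2 * κ * (ψ (x - 1) y + ψ (x + 1) y + ψ x (y - 1) + ψ x (y + 1)) = E * ψ x y) ∧
    (∀ x : ℤ, 4 * ψ x (x + 1) - 2 * κ * ψ (x - 1) (x + 1) - 2 * κ * ψ x (x + 2) =
      E * ψ x (x + 1)) := by
  rw [mul_add, exp_add] at hA
  subst hA
  have hψ_bethe : ψ = betheWave κ (exp (I * p₁)) (exp (I * p₂)) := by
    ext x y
    rw [hψ, hS, ← planeWave_exp, ← planeWave_exp]
    rfl
  have heigen : ψ ∈ (bulkHamiltonian κ).eigenspace E := by
    rw [hψ_bethe, hE, ← magnonEnergy_exp, ← magnonEnergy_exp]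
    exact betheWave_mem_eigenspace_bulkHamiltonian κ (exp_ne_zero _) (exp_ne_zero _)
  have hdefect : contactDefect κ ψ = 0 := by
    rw [hψ_bethe]
    exact contactDefect_betheWave (exp_ne_zero _) (exp_ne_zero _) hden
  exact ⟨bulkHamiltonian_apply_of_mem_eigenspace heigen,
    contactHamiltonian_apply_of_mem_eigenspace heigen hdefect⟩

end Momentum

/-- The two-magnon Bethe wavefunction `ψ(x,y) = e^{i(p₁x+p₂y)} + S e^{i(p₂x+p₁y)}`
with scattering amplitude `S = −(A − 2κe^{ip₂})/(A − 2κe^{ip₁})`, `A = 1 + e^{i(p₁+p₂)}`,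
satisfies the bulk and contact (Q Q̃ ordering) Schrödinger equations of the one-loop
'SU(2)' sector of the N=2 interpolating quiver theory, with additive total energy
`E = E(p₁) + E(p₂)`, `E(p) = 2(1+κ²) − 4κ cos p`. -/
theorem two_magnon_bethe_QQt (κ : ℂ) (p₁ p₂ : ℝ)
    (A : ℂ) (hA : A = 1 + Complex.exp (Complex.I * ((p₁ : ℂ) + (p₂ : ℂ))))
    (hden : A - 2 * κ * Complex.exp (Complex.I * (p₁ : ℂ)) ≠ 0)
    (S : ℂ) (hS : S = -(A - 2 * κ * Complex.exp (Complex.I * (p₂ : ℂ))) /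
      (A - 2 * κ * Complex.exp (Complex.I * (p₁ : ℂ))))
    (ψ : ℤ → ℤ → ℂ)
    (hψ : ∀ x y : ℤ, ψ x y =
      Complex.exp (Complex.I * ((p₁ : ℂ) * (x : ℂ) + (p₂ : ℂ) * (y : ℂ))) +
      S * Complex.exp (Complex.I * ((p₂ : ℂ) * (x : ℂ) + (p₁ : ℂ) * (y : ℂ))))
    (E : ℂ)
    (hE : E = (2 * (1 + κ ^ 2) - 4 * κ * (Real.cos p₁ : ℂ)) +
      (2 * (1 + κ ^ 2) - 4 * κ * (Real.cos p₂ : ℂ))) :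
    (∀ x y : ℤ, y > x + 1 →
      (4 + 4 * κ ^ 2) * ψ x y -
        2 * κ * (ψ (x - 1) y + ψ (x + 1) y + ψ x (y - 1) + ψ x (y + 1)) = E * ψ x y) ∧
    (∀ x : ℤ, 4 * ψ x (x + 1) - 2 * κ * ψ (x - 1) (x + 1) - 2 * κ * ψ x (x + 2) =
      E * ψ x (x + 1)) := by
  rw [Complex.ofReal_cos, Complex.ofReal_cos] at hE
  exact (two_magnon_bethe_QQt_general κ p₁ p₂ A hA hden S hS ψ hψ E hE).imp_left
    fun hbulk x y _ => hbulk x y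
end
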